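/- Lemma 5.1, x-part: in the field K = ℂ(x0,...,x5), write v1(x) = Σ_{i=1}^{6} Xi·bi + Σ_{i=1}^{6} Xi'·bi' + X01·c1 + X02·c2 + X∅·u. Then X1 = 1 + x3/x0 + x1x3^2/(x0x2^3) + 3x1x3x4/(x0x2^2) + 3x1x4^2/(x0x2) + x1x4^3/(x0x3) + (x1/x0 + x1x3/x0^2)x5; X2 = x2^3/x1^2 + x3^2/x2^3 + 3x3x4/x2^2 + 3x4^2/x2 + x4^3/x3 + x5 + x3x5/x0 + (x0x3(2x3+3x2x4) + x2^3(x4^3+x3x5))/(x0x1x3); X3 = x2^2/x1 + x3/x2 + x4 + x2x4^2/x0 + x2^2x4^3/(x0x3) + x2^2x5/x0; X4 = x2 + x1x3x4/(x0x2) + 2x1x4^2/x0 + x1x2x4^3/(x0x3) + x1x2x5/x0; X5 = (x2^2/x1 + x3/x2)x4 + 2x4^2 + x2x4^3/x3 + x2x5; X6 = x1 + x1^2x3^2/(x0x2^3) + 3x1^2x3x4/(x0x2^2) + 3x1^2x4^2/(x0x2) + x1^2x4^3/(x0x3) + x1^2x5/x0; X01 = x2x4; X02 = x3 + x1x3^2/x2^3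 + 3x1x3x4/x2^2 + 3x1x4^2/x2 + x1x4^3/x3 + x1x5; X6' = x0(x2^3/x1^2 + x3^2/x2^3 + 3x3x4/x2^2 + 3x4^2/x2 + x4^3/x3 + (2x3+3x2x4)/x1 + x5); X5' = x1(x3/x2 + x4); X4' = x0(x2^2/x1 + x3/x2 + x4); X3' = x0x2; X2' = x0x1; X1' = x0^2; X∅ = x0. -/

import Mathlib

noncomputable section

/-- The 15-dimensional space: basis indices 0..5 = b1..b6, 6..11 = b1'..b6',
12 = c1, 13 = c2, 14 = u. -/
abbrev VK (K : Type*) := Fin 15 → K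

variable {K : Type*} [Field K]

def f0op (v : VK K) : VK K :=
  ![v 13 + 2*v 14, v 11, v 9, v 8, 0, v 7, 0, 0, 0, 0, 0, 0, 0, 0, v 6]

def f1op (v : VK K) : VK K :=
  ![0, v 0, 0, 0, v 3, 0, v 7, 0, 0, v 10, 0, 3*v 12 + 2*v 13 + v 14, 0, v 5, 0]

def f2op (v : VK K) : VK K :=
  ![0, 0, v 1, 2*v 2, 0, 3*v 3, 0, 3*v 8, 2*v 9, v 11, 2*v 12 + v 13, 0, v 4, 0, 0]

def wtv : Fin 15 → Fin 3 → ℤ :=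
  ![![-2,1,0], ![-1,-1,3], ![-1,0,1], ![-1,1,-1], ![0,-1,2], ![-1,2,-3],
    ![2,-1,0], ![1,1,-3], ![1,0,-1], ![1,-1,1], ![0,1,-2], ![1,-2,3],
    ![0,0,0], ![0,0,0], ![0,0,0]]

/-- the diagonal operator `αi^∨(c)`, multiplying a basis vector `b` by `c^(wt(b)_i)`. -/
def alphaop (i : Fin 3) (c : K) (v : VK K) : VK K := fun k => c ^ (wtv k i) * v k

/-- `Y_0(c) = (1 + f0/c + f0^2/(2c^2)) ∘ α0^∨(c)` -/
def Y0op (c : K) (v : VK K) : VK K :=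
  fun k => alphaop 0 c v k + f0op (alphaop 0 c v) k / c + f0op (f0op (alphaop 0 c v)) k / (2*c^2)

/-- `Y_1(c) = (1 + f1/c + f1^2/(2c^2)) ∘ α1^∨(c)` -/
def Y1op (c : K) (v : VK K) : VK K :=
  fun k => alphaop 1 c v k + f1op (alphaop 1 c v) k / c + f1op (f1op (alphaop 1 c v)) k / (2*c^2)

/-- `Y_2(c) = (1 + f2/c + f2^2/(2c^2) + f2^3/(6c^3)) ∘ α2^∨(c)` -/
def Y2op (c : K) (v : VK K) : VK K :=
  fun k => alphaop 2 c v k + f2op (alphaop 2 c v) k / c + f2op (f2op (alphaop 2 c v)) k / (2*c^2)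
    + f2op (f2op (f2op (alphaop 2 c v))) k / (6*c^3)

/-- `v1(x) = Y_0(x0)Y_1(x1)Y_2(x2)Y_1(x3)Y_2(x4)Y_1(x5)·b1` -/
def v1vec (x0 x1 x2 x3 x4 x5 : K) : VK K :=
  Y0op x0 (Y1op x1 (Y2op x2 (Y1op x3 (Y2op x4 (Y1op x5 (Pi.single 0 1))))))

/-- `v2(y) = Y_2(y2)Y_1(y1)Y_2(y4)Y_1(y3)Y_0(y0)Y_1(y5)·b2'` -/
def v2vec (y0 y1 y2 y3 y4 y5 : K) : VK K :=
  Y2op y2 (Y1op y1 (Y2op y4 (Y1op y3 (Y0op y0 (Y1op y5 (Pi.single 7 1))))))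

end

/-!
The divided powers of the `f_i` have integer coefficients, so the denominators 2 and 6 cancel and
`Y_i(c)` acts by an explicit matrix of integer multiples of powers of `c`. Applied in turn
to `b1`, these matrices produce vectors whose entries stay short until the last factor; collecting
`q = x3^2/x2^3 + 3*x3*x4/x2^2 + 3*x4^2/x2 + x4^3/x3 + x5`, the coefficient of `b6` after `Y_2(x2)`,
then accounts for the recurring sum in the coefficients of `v1`.
-/

section

variable {K : Type*} [Field K]

theorem f0op_f0op (v : VK K) :
    f0op (f0op v) = (2 : K) • ![v 6, 0, 0, 0, 0, 0, 0, 0, 0, 0, 0, 0, 0, 0, 0] := by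
  ext k
  fin_cases k <;> simp [f0op]

theorem f1op_f1op (v : VK K) :
    f1op (f1op v) = (2 : K) • ![0, 0, 0, 0, 0, 0, 0, 0, 0, 0, 0, v 5, 0, 0, 0] := by
  ext k
  fin_cases k <;> simp [f1op]

theorem f2op_f2op (v : VK K) :
    f2op (f2op v) = (2 : K) • ![0, 0, 0, v 1, 0, 3*v 2, 0, 3*v 9, v 11, 0, v 4, 0, 0, 0, 0] := by
  ext k
  fin_cases k <;>
    simp only [f2op, Pi.smul_apply, smul_eq_mul, Matrix.cons_val, Fin.reduceFinMk, Fin.zero_eta,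
      Fin.mk_one] <;>
    ring

theorem f2op_f2op_f2op (v : VK K) :
    f2op (f2op (f2op v)) = (6 : K) • ![0, 0, 0, 0, 0, v 1, 0, v 11, 0, 0, 0, 0, 0, 0, 0] := by
  ext k
  fin_cases k <;>
    simp only [f2op, Pi.smul_apply, smul_eq_mul, Matrix.cons_val, Fin.reduceFinMk, Fin.zero_eta,
      Fin.mk_one] <;>
    ring

theorem alphaop_zero_eq (c : K) (v : VK K) :
    alphaop 0 c v = ![v 0/c^2, v 1/c, v 2/c, v 3/c, v 4, v 5/c, c^2*v 6, c*v 7, c*v 8, c*v 9,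
      v 10, c*v 11, v 12, v 13, v 14] := by
  ext k
  fin_cases k <;> simp [alphaop, wtv, zpow_neg, zpow_ofNat, div_eq_inv_mul]

theorem alphaop_one_eq (c : K) (v : VK K) :
    alphaop 1 c v = ![c*v 0, v 1/c, v 2, c*v 3, v 4/c, c^2*v 5, v 6/c, c*v 7, v 8, v 9/c,
      c*v 10, v 11/c^2, v 12, v 13, v 14] := by
  ext k
  fin_cases k <;> simp [alphaop, wtv, zpow_neg, zpow_ofNat, div_eq_inv_mul]

theorem alphaop_two_eq (c : K) (v : VK K) :
    alphaop 2 c v = ![v 0, c^3*v 1, c*v 2, v 3/c, c^2*v 4, v 5/c^3, v 6, v 7/c^3, v 8/c, c*v 9,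
      v 10/c^2, c^3*v 11, v 12, v 13, v 14] := by
  ext k
  fin_cases k <;> simp [alphaop, wtv, zpow_neg, zpow_ofNat, div_eq_inv_mul]

theorem Y0op_eq [NeZero (2 : K)] {c : K} (hc : c ≠ 0) (v : VK K) :
    Y0op c v = ![v 0/c^2 + v 13/c + 2*v 14/c + v 6, v 1/c + v 11, v 2/c + v 9, v 3/c + v 8,
      v 4, v 5/c + v 7, c^2*v 6, c*v 7, c*v 8, c*v 9, v 10, c*v 11, v 12, v 13,
      v 14 + c*v 6] := by
  ext k
  rw [Y0op, f0op_f0op, alphaop_zero_eq, f0op]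
  fin_cases k <;>
    simp only [Pi.smul_apply, smul_eq_mul, Matrix.cons_val, Fin.reduceFinMk, Fin.zero_eta,
      Fin.mk_one] <;>
    field_simp <;> ring

theorem Y1op_eq [NeZero (2 : K)] {c : K} (hc : c ≠ 0) (v : VK K) :
    Y1op c v = ![c*v 0, v 1/c + v 0, v 2, c*v 3, v 4/c + v 3, c^2*v 5, v 6/c + v 7, c*v 7, v 8,
      v 9/c + v 10, c*v 10, v 11/c^2 + (3*v 12 + 2*v 13 + v 14)/c + v 5, v 12, v 13 + c*v 5,
      v 14] := by
  ext k
  rw [Y1op, f1op_f1op, alphaop_one_eq, f1op]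
  fin_cases k <;>
    simp only [Pi.smul_apply, smul_eq_mul, Matrix.cons_val, Fin.reduceFinMk, Fin.zero_eta,
      Fin.mk_one] <;>
    field_simp <;> ring

theorem Y2op_eq [NeZero (2 : K)] [NeZero (3 : K)] {c : K} (hc : c ≠ 0) (v : VK K) :
    Y2op c v = ![v 0, c^3*v 1, c*v 2 + c^2*v 1, v 3/c + 2*v 2 + c*v 1, c^2*v 4,
      v 5/c^3 + 3*v 3/c^2 + 3*v 2/c + v 1, v 6, v 7/c^3 + 3*v 8/c^2 + 3*v 9/c + v 11,
      v 8/c + 2*v 9 + c*v 11, c*v 9 + c^2*v 11, v 10/c^2 + (2*v 12 + v 13)/c + v 4,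
      c^3*v 11, v 12 + c*v 4, v 13, v 14] := by
  have h6 : (6 : K) ≠ 0 := by
    rw [show (6 : K) = 2 * 3 by norm_num]
    exact mul_ne_zero two_ne_zero three_ne_zero
  ext k
  rw [Y2op, f2op_f2op_f2op, f2op_f2op, alphaop_two_eq, f2op]
  fin_cases k <;>
    simp only [Pi.smul_apply, smul_eq_mul, Matrix.cons_val, Fin.reduceFinMk, Fin.zero_eta,
      Fin.mk_one] <;>
    field_simp <;> ring

theorem Y1op_single_zero [NeZero (2 : K)] {x5 : K} (h5 : x5 ≠ 0) :
    Y1op x5 (Pi.single 0 1) = ![x5, 1, 0, 0, 0, 0, 0, 0, 0, 0, 0, 0, 0, 0, 0] := by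
  rw [Y1op_eq h5]
  ext k
  fin_cases k <;> simp

variable [NeZero (2 : K)] [NeZero (3 : K)] {x0 x1 x2 x3 x4 x5 : K}

theorem Y2op_Y1op_single_zero (h4 : x4 ≠ 0) (h5 : x5 ≠ 0) :
    Y2op x4 (Y1op x5 (Pi.single 0 1)) =
      ![x5, x4^3, x4^2, x4, 0, 1, 0, 0, 0, 0, 0, 0, 0, 0, 0] := by
  rw [Y1op_single_zero h5, Y2op_eq h4]
  ext k
  fin_cases k <;> simp

theorem Y1op_Y2op_Y1op_single_zero (h3 : x3 ≠ 0) (h4 : x4 ≠ 0) (h5 : x5 ≠ 0) :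
    Y1op x3 (Y2op x4 (Y1op x5 (Pi.single 0 1))) =
      ![x3*x5, x4^3/x3 + x5, x4^2, x3*x4, x4, x3^2, 0, 0, 0, 0, 0, 1, 0, x3, 0] := by
  rw [Y2op_Y1op_single_zero h4 h5, Y1op_eq h3]
  ext k
  fin_cases k <;> simp

theorem Y2op_Y1op_Y2op_Y1op_single_zero (h2 : x2 ≠ 0) (h3 : x3 ≠ 0) (h4 : x4 ≠ 0) (h5 : x5 ≠ 0) :
    Y2op x2 (Y1op x3 (Y2op x4 (Y1op x5 (Pi.single 0 1)))) =
      ![x3*x5,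
        x2^3*(x4^3/x3 + x5),
        x2*x4^2 + x2^2*(x4^3/x3 + x5),
        x3*x4/x2 + 2*x4^2 + x2*(x4^3/x3 + x5),
        x2^2*x4,
        x3^2/x2^3 + 3*x3*x4/x2^2 + 3*x4^2/x2 + x4^3/x3 + x5,
        0, 1, x2, x2^2, x3/x2 + x4, x2^3, x2*x4, x3, 0] := by
  rw [Y1op_Y2op_Y1op_single_zero h3 h4 h5, Y2op_eq h2]
  ext k
  fin_cases k <;>
    simp only [Matrix.cons_val, Fin.reduceFinMk, Fin.zero_eta, Fin.mk_one] <;>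
    ring

theorem Y1op_Y2op_Y1op_Y2op_Y1op_single_zero (h1 : x1 ≠ 0) (h2 : x2 ≠ 0) (h3 : x3 ≠ 0)
    (h4 : x4 ≠ 0) (h5 : x5 ≠ 0) :
    Y1op x1 (Y2op x2 (Y1op x3 (Y2op x4 (Y1op x5 (Pi.single 0 1))))) =
      ![x1*x3*x5,
        x2^3*(x4^3/x3 + x5)/x1 + x3*x5,
        x2*x4^2 + x2^2*(x4^3/x3 + x5),
        x1*(x3*x4/x2 + 2*x4^2 + x2*(x4^3/x3 + x5)),
        x2^2*x4/x1 + x3*x4/x2 + 2*x4^2 + x2*(x4^3/x3 + x5),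
        x1^2*(x3^2/x2^3 + 3*x3*x4/x2^2 + 3*x4^2/x2 + x4^3/x3 + x5),
        1, x1, x2,
        x2^2/x1 + x3/x2 + x4,
        x1*(x3/x2 + x4),
        x2^3/x1^2 + x3^2/x2^3 + 3*x3*x4/x2^2 + 3*x4^2/x2 + x4^3/x3
          + (2*x3 + 3*x2*x4)/x1 + x5,
        x2*x4,
        x3 + x1*(x3^2/x2^3 + 3*x3*x4/x2^2 + 3*x4^2/x2 + x4^3/x3 + x5),
        0] := by
  rw [Y2op_Y1op_Y2op_Y1op_single_zero h2 h3 h4 h5, Y1op_eq h1]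
  ext k
  fin_cases k <;>
    simp only [Matrix.cons_val, Fin.reduceFinMk, Fin.zero_eta, Fin.mk_one] <;>
    ring

/-- The case `K = ℂ(x0,...,x5)`, with `x0,...,x5` the variables, is the identity of rational
functions in the paper. -/
theorem v1_coefficients_general (h0 : x0 ≠ 0) (h1 : x1 ≠ 0) (h2 : x2 ≠ 0) (h3 : x3 ≠ 0)
    (h4 : x4 ≠ 0) (h5 : x5 ≠ 0) :
    v1vec x0 x1 x2 x3 x4 x5 =
      ![1 + x3/x0 + x1*x3^2/(x0*x2^3) + 3*x1*x3*x4/(x0*x2^2) + 3*x1*x4^2/(x0*x2)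
          + x1*x4^3/(x0*x3) + (x1/x0 + x1*x3/x0^2)*x5,
        x2^3/x1^2 + x3^2/x2^3 + 3*x3*x4/x2^2 + 3*x4^2/x2 + x4^3/x3 + x5 + x3*x5/x0
          + (x0*x3*(2*x3 + 3*x2*x4) + x2^3*(x4^3 + x3*x5))/(x0*x1*x3),
        x2^2/x1 + x3/x2 + x4 + x2*x4^2/x0 + x2^2*x4^3/(x0*x3) + x2^2*x5/x0,
        x2 + x1*x3*x4/(x0*x2) + 2*x1*x4^2/x0 + x1*x2*x4^3/(x0*x3) + x1*x2*x5/x0,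
        (x2^2/x1 + x3/x2)*x4 + 2*x4^2 + x2*x4^3/x3 + x2*x5,
        x1 + x1^2*x3^2/(x0*x2^3) + 3*x1^2*x3*x4/(x0*x2^2) + 3*x1^2*x4^2/(x0*x2)
          + x1^2*x4^3/(x0*x3) + x1^2*x5/x0,
        x0^2,
        x0*x1,
        x0*x2,
        x0*(x2^2/x1 + x3/x2 + x4),
        x1*(x3/x2 + x4),
        x0*(x2^3/x1^2 + x3^2/x2^3 + 3*x3*x4/x2^2 + 3*x4^2/x2 + x4^3/x3
          + (2*x3 + 3*x2*x4)/x1 + x5),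
        x2*x4,
        x3 + x1*x3^2/x2^3 + 3*x1*x3*x4/x2^2 + 3*x1*x4^2/x2 + x1*x4^3/x3 + x1*x5,
        x0] := by
  rw [v1vec, Y1op_Y2op_Y1op_Y2op_Y1op_single_zero h1 h2 h3 h4 h5, Y0op_eq h0]
  ext k
  fin_cases k <;>
    simp only [Matrix.cons_val, Fin.reduceFinMk, Fin.zero_eta, Fin.mk_one] <;>
    field_simp <;> ring

end

/-- Lemma 5.1, `x`-part: the coefficients of `v1(x)` in the basis
`(b1,...,b6,b1',...,b6',c1,c2,u)`. -/
theorem v1_coefficients (x0 x1 x2 x3 x4 x5 : ℂ) (h0 : x0 ≠ 0) (h1 : x1 ≠ 0) (h2 : x2 ≠ 0) (h3 : x3 ≠ 0) (h4 : x4 ≠ 0) (h5 : x5 ≠ 0) :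
    v1vec x0 x1 x2 x3 x4 x5 =
      ![1 + x3/x0 + x1*x3^2/(x0*x2^3) + 3*x1*x3*x4/(x0*x2^2) + 3*x1*x4^2/(x0*x2)
          + x1*x4^3/(x0*x3) + (x1/x0 + x1*x3/x0^2)*x5,
        x2^3/x1^2 + x3^2/x2^3 + 3*x3*x4/x2^2 + 3*x4^2/x2 + x4^3/x3 + x5 + x3*x5/x0
          + (x0*x3*(2*x3 + 3*x2*x4) + x2^3*(x4^3 + x3*x5))/(x0*x1*x3),
        x2^2/x1 + x3/x2 + x4 + x2*x4^2/x0 + x2^2*x4^3/(x0*x3) + x2^2*x5/x0,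
        x2 + x1*x3*x4/(x0*x2) + 2*x1*x4^2/x0 + x1*x2*x4^3/(x0*x3) + x1*x2*x5/x0,
        (x2^2/x1 + x3/x2)*x4 + 2*x4^2 + x2*x4^3/x3 + x2*x5,
        x1 + x1^2*x3^2/(x0*x2^3) + 3*x1^2*x3*x4/(x0*x2^2) + 3*x1^2*x4^2/(x0*x2)
          + x1^2*x4^3/(x0*x3) + x1^2*x5/x0,
        x0^2,
        x0*x1,
        x0*x2,
        x0*(x2^2/x1 + x3/x2 + x4),
        x1*(x3/x2 + x4),
        x0*(x2^3/x1^2 + x3^2/x2^3 + 3*x3*x4/x2^2 + 3*x4^2/x2 + x4^3/x3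
          + (2*x3 + 3*x2*x4)/x1 + x5),
        x2*x4,
        x3 + x1*x3^2/x2^3 + 3*x1*x3*x4/x2^2 + 3*x1*x4^2/x2 + x1*x4^3/x3 + x1*x5,
        x0] :=
  v1_coefficients_general h0 h1 h2 h3 h4 h5
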